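/- Let 𝒜 = {A₁,…,Aₙ} be a finite family of real 2×2 matrices, ordered so that det A_i < 0 exactly for i = 1,…,k, and let 𝒜₁ = 𝒜 ∪ {A_iA_j : det A_i < 0, det A_j < 0, A_iA_j not a scalar multiple of the identity}. Suppose every matrix in 𝒜₁ is a diagonalizable Vandergraft matrix, and suppose u₁,…,u_N are unit vectors, exactly one spanning each distinct dominant eigenline of the non-scalar matrices of 𝒜₁, whose directions are chosen so that Cone{u₁,…,u_N} is a proper cone whose interior contains no non-dominant eigenvector of any matrix of 𝒜₁. Set K = Cone{u_j : 1 ≤ j ≤ N} ∪ {A_i u_j : 1 ≤ i ≤ k, 1 ≤ j ≤ N}. Then there exists a proper cone invariant under every matrix of 𝒜 if and only if K is a proper cone, the interior of K contains no non-dominant eigenvector of any matrix in 𝒜₁, and no boundary ray of K is spanned by an eigenvector of any A_i with 1 ≤ i ≤ k. -/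

import Mathlib

/-- A set `K ⊆ ℝ^m` is a proper cone: closed under nonnegative scaling,
convex (closed under addition), topologically closed, pointed and solid. -/
def IsProperCone {m : ℕ} (K : Set (Fin m → ℝ)) : Prop :=
  (∀ a : ℝ, 0 ≤ a → ∀ x ∈ K, a • x ∈ K) ∧
  (∀ x ∈ K, ∀ y ∈ K, x + y ∈ K) ∧
  IsClosed K ∧ K ∩ (-K) = {0} ∧ (interior K).Nonempty

/-- `K` is invariant under the matrix `A`. -/
def InvariantUnder {m : ℕ} (A : Matrix (Fin m) (Fin m) ℝ) (K : Set (Fin m → ℝ)) : Prop :=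
  ∀ x ∈ K, A.mulVec x ∈ K

/-- `coneGen X` is the smallest convex cone containing `X`. -/
def coneGen {m : ℕ} (X : Set (Fin m → ℝ)) : Set (Fin m → ℝ) :=
  ⋂₀ {K : Set (Fin m → ℝ) |
    (∀ a : ℝ, 0 ≤ a → ∀ x ∈ K, a • x ∈ K) ∧ (∀ x ∈ K, ∀ y ∈ K, x + y ∈ K) ∧ X ⊆ K}

/-- `A` is a Vandergraft matrix: `(trace A)² ≥ 4 det A` and `trace A ≥ 0`. -/
def IsVandergraft (A : Matrix (Fin 2) (Fin 2) ℝ) : Prop :=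
  A.trace ^ 2 ≥ 4 * A.det ∧ 0 ≤ A.trace

/-- The spectral radius (largest eigenvalue) of a `2×2` Vandergraft matrix. -/
noncomputable def rho2 (A : Matrix (Fin 2) (Fin 2) ℝ) : ℝ :=
  (A.trace + Real.sqrt (A.trace ^ 2 - 4 * A.det)) / 2

/-- `A` is diagonalizable by a real similarity. -/
def IsDiagonalizable (A : Matrix (Fin 2) (Fin 2) ℝ) : Prop :=
  ∃ P : Matrix (Fin 2) (Fin 2) ℝ, IsUnit P.det ∧ (P⁻¹ * A * P).IsDiag

/-- `u` is a dominant eigenvector of `A`. -/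
noncomputable def DomEigvec (A : Matrix (Fin 2) (Fin 2) ℝ) (u : Fin 2 → ℝ) : Prop :=
  u ≠ 0 ∧ A.mulVec u = rho2 A • u

/-- `v` is a non-dominant eigenvector of `A`. -/
noncomputable def NonDomEigvec (A : Matrix (Fin 2) (Fin 2) ℝ) (v : Fin 2 → ℝ) : Prop :=
  ∃ μ : ℝ, μ ≠ rho2 A ∧ v ≠ 0 ∧ A.mulVec v = μ • v

/-- The extended family `𝒜₁`: `𝒜` together with all products `A i * A j` of
two negative-determinant members that are not scalar multiples of `I`. -/
def fam1 {n : ℕ} (A : Fin n → Matrix (Fin 2) (Fin 2) ℝ) :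
    Set (Matrix (Fin 2) (Fin 2) ℝ) :=
  Set.range A ∪
    {M | ∃ i j : Fin n, (A i).det < 0 ∧ (A j).det < 0 ∧ M = A i * A j ∧
      ¬ ∃ c : ℝ, M = c • (1 : Matrix (Fin 2) (Fin 2) ℝ)}

/-- The cone `K` generated by the dominant eigenvectors `u j` together with
their images `A i *ᵥ u j` under the negative-determinant matrices
(`i < k`). -/
def bigCone (n k N : ℕ) (A : Fin n → Matrix (Fin 2) (Fin 2) ℝ)
    (u : Fin N → (Fin 2 → ℝ)) : Set (Fin 2 → ℝ) :=
  coneGen (Set.range u ∪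
    {w | ∃ i : Fin n, (i : ℕ) < k ∧ ∃ j : Fin N, w = (A i).mulVec (u j)})

/-!
A non-scalar diagonalizable `2 × 2` matrix with dominant eigenvector `u` has the form
`M = μ I + u wᵀ` with `wᵀu > 0`; its non-dominant eigenvectors are the nonzero vectors on the line
`wᵀx = 0`.

If `K` is a proper cone containing `u` whose interior misses that line, then `wᵀx ≥ 0` on `K`, and
`M x = μ x + (wᵀx) u` stays in `K` as soon as `μ ≥ 0`, that is, `det M ≥ 0`. A matrix with negative
determinant maps the generators `u j` into `K` by construction and the generators `A l *ᵥ u j` into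
`K` because the product `A i * A l` has positive determinant.

Conversely, let `C` be a proper cone invariant under `M`. Since `C` is closed, iterating `M` gives
`(wᵀx) u ∈ C` for `x ∈ C`, so `u` or `-u` lies in `C` and the line `wᵀx = 0` misses the interior of
`C`. If `μ < 0`, then `w` is even strictly positive on `C \ {0}` once `u ∈ C`. This strict
positivity aligns the signs of the `u j`, makes `K ⊆ C` closed, and, since `(wᵀp) u = M p - μ p` is
interior to `K` for a suitable `p`, keeps the eigenvectors of `M` off the boundary of `K`.
-/

open scoped Matrix Pointwise Topology

section ConvexCone

/-- A convex cone in the sense of `coneGen`, which is the smallest one containing a given set. The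
empty set counts as a convex cone. -/
structure IsConvexCone {E : Type*} [AddCommMonoid E] [Module ℝ E] (K : Set E) : Prop where
  smul_mem : ∀ ⦃a : ℝ⦄, 0 ≤ a → ∀ ⦃x : E⦄, x ∈ K → a • x ∈ K
  add_mem : ∀ ⦃x y : E⦄, x ∈ K → y ∈ K → x + y ∈ K

variable {E : Type*} [AddCommGroup E] [Module ℝ E] {K : Set E} {p u x : E}

lemma isConvexCone_Ici_smul {B : Set E} (hB : Convex ℝ B) :
    IsConvexCone (Set.Ici (0 : ℝ) • B) where
  smul_mem := by
    rintro a ha _ ⟨t, ht, b, hb, rfl⟩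
    exact ⟨a * t, mul_nonneg ha ht, b, hb, mul_smul a t b⟩
  add_mem := by
    rintro _ _ ⟨s, hs, b, hb, rfl⟩ ⟨t, ht, c, hc, rfl⟩
    have hmem : s • b + t • c ∈ (s + t) • B := by
      rw [hB.add_smul hs ht]
      exact Set.add_mem_add (Set.smul_mem_smul_set hb) (Set.smul_mem_smul_set hc)
    obtain ⟨d, hd, hsum⟩ := hmem
    exact ⟨s + t, Set.mem_Ici.2 (add_nonneg hs ht), d, hd, hsum⟩

lemma isClosed_Ici_smul_of_forall_pos [TopologicalSpace E] [ContinuousSMul ℝ E] [T2Space E]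
    {B : Set E} (hB : IsCompact B) (φ : StrongDual ℝ E) (hφ : ∀ b ∈ B, 0 < φ b) :
    IsClosed (Set.Ici (0 : ℝ) • B) := by
  obtain ⟨δ, hδ, hδB⟩ := hB.exists_forall_le' φ.continuous.continuousOn hφ
  refine isClosed_of_closure_subset fun x hx => ?_
  -- Where `φ < φ x + 1`, the cone agrees with a compact truncation.
  let U : Set E := {y | φ y < φ x + 1}
  have hU : IsOpen U := isOpen_lt φ.continuous continuous_const
  have htrunc : U ∩ Set.Ici (0 : ℝ) • B ⊆ Set.Icc 0 ((φ x + 1) / δ) • B := by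
    rintro _ ⟨hlt, t, ht, b, hb, rfl⟩
    have hlt' : t * φ b < φ x + 1 := by simpa [U] using hlt
    refine ⟨t, ⟨ht, ?_⟩, b, hb, rfl⟩
    rw [le_div_iff₀ hδ]
    exact (mul_le_mul_of_nonneg_left (hδB b hb) ht).trans hlt'.le
  have hclosed : IsClosed (Set.Icc 0 ((φ x + 1) / δ) • B) := (isCompact_Icc.smul_set hB).isClosed
  have hxU : x ∈ closure (U ∩ Set.Ici (0 : ℝ) • B) := hU.inter_closure ⟨lt_add_one (φ x), hx⟩
  exact Set.smul_subset_smul_right Set.Icc_subset_Ici_self (closure_minimal htrunc hclosed hxU)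

lemma exists_pos_add_smul_mem_sub_smul_mem [TopologicalSpace E] [ContinuousAdd E]
    [ContinuousSMul ℝ E] (hp : p ∈ interior K) (w : E) :
    ∃ ε : ℝ, 0 < ε ∧ p + ε • w ∈ K ∧ p - ε • w ∈ K := by
  have hline : ∀ᶠ t : ℝ in 𝓝 0, p + t • w ∈ K := by
    have hcont : ContinuousAt (fun t : ℝ => p + t • w) 0 := by fun_prop
    exact hcont.eventually (by simpa using mem_interior_iff_mem_nhds.1 hp)
  obtain ⟨r, hr, hball⟩ := Metric.eventually_nhds_iff.1 hline
  refine ⟨r / 2, half_pos hr, hball ?_, ?_⟩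
  · simpa [abs_of_pos hr] using hr
  · rw [sub_eq_add_neg, ← neg_smul]
    exact hball (by simpa [abs_of_pos hr] using hr)

namespace IsConvexCone

lemma zero_mem (hK : IsConvexCone K) (hne : K.Nonempty) : (0 : E) ∈ K := by
  obtain ⟨x, hx⟩ := hne
  simpa using hK.smul_mem le_rfl hx

lemma smul_mem_interior [TopologicalSpace E] [ContinuousConstSMul ℝ E] (hK : IsConvexCone K)
    {a : ℝ} (ha : 0 < a) (hp : p ∈ interior K) : a • p ∈ interior K := by
  have hsub : a • K ⊆ K := Set.smul_set_subset_iff.2 fun _ hx => hK.smul_mem ha.le hx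
  exact interior_mono hsub (interior_smul₀ ha.ne' K ▸ Set.smul_mem_smul_set hp)

variable [TopologicalSpace E] [IsTopologicalAddGroup E]

lemma add_mem_interior (hK : IsConvexCone K) (hp : p ∈ interior K) (hx : x ∈ K) :
    p + x ∈ interior K :=
  interior_mono (Set.add_subset_iff.2 fun _ hy _ hz => hK.add_mem hy hz)
    (subset_interior_add_left (Set.add_mem_add hp hx))

lemma exists_mem_interior_apply_eq_zero (hK : IsConvexCone K) (φ : Module.Dual ℝ E)
    (hp : p ∈ interior K) (hx : x ∈ K) (hneg : φ p * φ x < 0) : ∃ q ∈ interior K, φ q = 0 := by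
  have hx0 : φ x ≠ 0 := right_ne_zero_of_mul hneg.ne
  have hcoef : 0 ≤ -φ p / φ x := by
    rw [← mul_div_mul_right _ _ hx0, neg_mul]
    exact div_nonneg (neg_nonneg.2 hneg.le) (mul_self_nonneg _)
  refine ⟨p + (-φ p / φ x) • x, hK.add_mem_interior hp (hK.smul_mem hcoef hx), ?_⟩
  rw [map_add, map_smul, smul_eq_mul, div_mul_cancel₀ _ hx0, add_neg_cancel]

lemma apply_nonneg_of_forall_mem_interior_ne_zero (hK : IsConvexCone K)
    (hne : (interior K).Nonempty) (φ : Module.Dual ℝ E) (hφ : ∀ q ∈ interior K, φ q ≠ 0)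
    (hu : u ∈ K) (hφu : 0 < φ u) (hx : x ∈ K) : 0 ≤ φ x := by
  obtain ⟨p, hp⟩ := hne
  have hsign : ∀ y ∈ K, 0 ≤ φ p * φ y := by
    intro y hy
    by_contra! hneg
    obtain ⟨q, hq, hq0⟩ := hK.exists_mem_interior_apply_eq_zero φ hp hy hneg
    exact hφ q hq hq0
  have hφp : 0 < φ p :=
    (nonneg_of_mul_nonneg_left (hsign u hu) hφu).lt_of_ne' (hφ p hp)
  exact nonneg_of_mul_nonneg_right (hsign x hx) hφp

end IsConvexCone

end ConvexCone

section GeneratedCone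

variable {m : ℕ} {X K : Set (Fin m → ℝ)}

lemma isConvexCone_coneGen (X : Set (Fin m → ℝ)) : IsConvexCone (coneGen X) where
  smul_mem a ha x hx L hL := hL.1 a ha x (hx L hL)
  add_mem x y hx hy L hL := hL.2.1 x (hx L hL) y (hy L hL)

lemma subset_coneGen (X : Set (Fin m → ℝ)) : X ⊆ coneGen X :=
  fun _ hx _ hL => hL.2.2 hx

lemma coneGen_subset (hK : IsConvexCone K) (hX : X ⊆ K) : coneGen X ⊆ K :=
  fun _ hx => hx K ⟨fun _ ha _ hy => hK.smul_mem ha hy, fun _ hy _ hz => hK.add_mem hy hz, hX⟩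

lemma coneGen_mono {Y : Set (Fin m → ℝ)} (hXY : X ⊆ Y) : coneGen X ⊆ coneGen Y :=
  coneGen_subset (isConvexCone_coneGen Y) (hXY.trans (subset_coneGen Y))

lemma mulVec_mem_of_mem_coneGen {M : Matrix (Fin m) (Fin m) ℝ} (hK : IsConvexCone K)
    (hX : ∀ x ∈ X, M *ᵥ x ∈ K) {x : Fin m → ℝ} (hx : x ∈ coneGen X) : M *ᵥ x ∈ K := by
  have hpre : IsConvexCone (M.mulVec ⁻¹' K) :=
    { smul_mem := fun a ha y hy => by
        simpa only [Set.mem_preimage, Matrix.mulVec_smul] using hK.smul_mem ha hy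
      add_mem := fun y z hy hz => by
        simpa only [Set.mem_preimage, Matrix.mulVec_add] using hK.add_mem hy hz }
  exact coneGen_subset hpre hX hx

lemma coneGen_eq_Ici_smul_convexHull (X : Set (Fin m → ℝ)) :
    coneGen X = Set.Ici (0 : ℝ) • convexHull ℝ X := by
  apply Set.Subset.antisymm
  · refine coneGen_subset (isConvexCone_Ici_smul (convex_convexHull ℝ X)) fun x hx => ?_
    exact ⟨1, Set.mem_Ici.2 zero_le_one, x, subset_convexHull ℝ X hx, one_smul ℝ x⟩
  · have hcone := isConvexCone_coneGen X
    have hconvex : Convex ℝ (coneGen X) := fun x hx y hy a b ha hb _ =>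
      hcone.add_mem (hcone.smul_mem ha hx) (hcone.smul_mem hb hy)
    rintro _ ⟨t, ht, x, hx, rfl⟩
    exact hcone.smul_mem ht (convexHull_min (subset_coneGen X) hconvex hx)

lemma isClosed_coneGen_of_finite (hX : X.Finite) (φ : StrongDual ℝ (Fin m → ℝ))
    (hφ : ∀ x ∈ X, 0 < φ x) : IsClosed (coneGen X) := by
  rw [coneGen_eq_Ici_smul_convexHull]
  refine isClosed_Ici_smul_of_forall_pos (hX.isCompact_convexHull ℝ) φ fun x hx => ?_
  exact convexHull_min hφ (convex_halfSpace_gt φ.isLinear 0) hx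

end GeneratedCone

section ProperCone

variable {m : ℕ} {K C : Set (Fin m → ℝ)} {x p : Fin m → ℝ}

namespace IsProperCone

lemma isConvexCone (hK : IsProperCone K) : IsConvexCone K where
  smul_mem a ha x hx := hK.1 a ha x hx
  add_mem x y hx hy := hK.2.1 x hx y hy

lemma isClosed (hK : IsProperCone K) : IsClosed K := hK.2.2.1

lemma nonempty_interior (hK : IsProperCone K) : (interior K).Nonempty := hK.2.2.2.2

lemma eq_zero_of_neg_mem (hK : IsProperCone K) (hx : x ∈ K) (hneg : -x ∈ K) : x = 0 := by
  have hmem : x ∈ K ∩ -K := ⟨hx, hneg⟩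
  rwa [hK.2.2.2.1] at hmem

lemma eq_zero_of_smul_mem (hK : IsProperCone K) {c : ℝ} (hc : c < 0) (hx : x ∈ K)
    (hcx : c • x ∈ K) : x = 0 := by
  refine hK.eq_zero_of_neg_mem hx ?_
  have hmem := hK.isConvexCone.smul_mem (neg_nonneg.2 (inv_nonpos.2 hc.le)) hcx
  rwa [smul_smul, neg_mul, inv_mul_cancel₀ hc.ne, neg_one_smul] at hmem

lemma ne_zero_of_mem_interior [NeZero m] (hK : IsProperCone K) (hp : p ∈ interior K) : p ≠ 0 := by
  rintro rfl
  obtain ⟨ε, hε, hpos, hneg⟩ := exists_pos_add_smul_mem_sub_smul_mem hp (1 : Fin m → ℝ)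
  rw [zero_add] at hpos
  rw [zero_sub] at hneg
  exact smul_ne_zero hε.ne' one_ne_zero (hK.eq_zero_of_neg_mem hpos hneg)

lemma of_subset (hC : IsProperCone C) (hKC : K ⊆ C) (hK : IsConvexCone K) (hclosed : IsClosed K)
    (hne : (interior K).Nonempty) : IsProperCone K := by
  refine ⟨fun _ ha _ hx => hK.smul_mem ha hx, fun _ hx _ hy => hK.add_mem hx hy, hclosed, ?_, hne⟩
  refine Set.Subset.antisymm (fun x hx => hC.eq_zero_of_neg_mem (hKC hx.1) (hKC hx.2)) ?_
  rintro _ rfl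
  have hzero := hK.zero_mem (hne.mono interior_subset)
  exact ⟨hzero, by simpa using hzero⟩

lemma neg (hC : IsProperCone C) : IsProperCone (-C) := by
  refine ⟨fun a ha x hx => ?_, fun x hx y hy => ?_, hC.isClosed.neg, ?_, ?_⟩
  · rw [Set.mem_neg, ← smul_neg]
    exact hC.isConvexCone.smul_mem ha hx
  · rw [Set.mem_neg, neg_add]
    exact hC.isConvexCone.add_mem hx hy
  · rw [neg_neg, Set.inter_comm]
    exact hC.2.2.2.1
  · have himage : (Homeomorph.neg (Fin m → ℝ)) ⁻¹' interior C = interior (-C) :=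
      (Homeomorph.neg _).preimage_interior C
    exact himage ▸ hC.nonempty_interior.neg

end IsProperCone

lemma InvariantUnder.neg {M : Matrix (Fin m) (Fin m) ℝ} (hM : InvariantUnder M C) :
    InvariantUnder M (-C) := by
  intro x hx
  rw [Set.mem_neg, ← Matrix.mulVec_neg]
  exact hM (-x) hx

end ProperCone

section DominantSplitting

/-- The decomposition `M = μ I + u wᵀ` with `wᵀ u > 0`: the matrix acts as `μ` on the hyperplane
`wᵀ x = 0` and has the eigenvector `u` with the larger eigenvalue `μ + wᵀ u`. For `2 × 2` matrices
this encodes a dominant eigenvector `u` together with the non-dominant eigenline `wᵀ x = 0`. -/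
structure IsDominantSplitting {m : ℕ} (M : Matrix (Fin m) (Fin m) ℝ) (μ : ℝ)
    (u w : Fin m → ℝ) : Prop where
  eq_add_vecMulVec : M = μ • 1 + Matrix.vecMulVec u w
  dotProduct_pos : 0 < w ⬝ᵥ u

namespace IsDominantSplitting

variable {m : ℕ} {M : Matrix (Fin m) (Fin m) ℝ} {μ c : ℝ} {u w v : Fin m → ℝ}

lemma mulVec_eq (h : IsDominantSplitting M μ u w) (x : Fin m → ℝ) :
    M *ᵥ x = μ • x + (w ⬝ᵥ x) • u := by
  rw [h.eq_add_vecMulVec, Matrix.add_mulVec, Matrix.smul_mulVec, Matrix.one_mulVec,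
    Matrix.vecMulVec_mulVec, op_smul_eq_smul]

lemma mulVec_self (h : IsDominantSplitting M μ u w) : M *ᵥ u = (μ + w ⬝ᵥ u) • u := by
  rw [h.mulVec_eq, add_smul]

lemma ne_zero (h : IsDominantSplitting M μ u w) : u ≠ 0 := by
  rintro rfl
  simpa using h.dotProduct_pos

lemma of_smul_left (h : IsDominantSplitting M μ (c • u) w) :
    IsDominantSplitting M μ u (c • w) where
  eq_add_vecMulVec := by
    rw [Matrix.vecMulVec_smul, ← Matrix.smul_vecMulVec]
    exact h.eq_add_vecMulVec
  dotProduct_pos := by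
    rw [smul_dotProduct, ← dotProduct_smul]
    exact h.dotProduct_pos

lemma conj (h : IsDominantSplitting M μ u w) {P : Matrix (Fin m) (Fin m) ℝ}
    (hP : IsUnit P.det) : IsDominantSplitting (P * M * P⁻¹) μ (P *ᵥ u) (w ᵥ* P⁻¹) where
  eq_add_vecMulVec := by
    rw [h.eq_add_vecMulVec, mul_add, add_mul, mul_smul_comm, mul_one, smul_mul_assoc,
      Matrix.mul_nonsing_inv P hP, Matrix.mul_vecMulVec, Matrix.vecMulVec_mul]
  dotProduct_pos := by
    rw [Matrix.dotProduct_mulVec, Matrix.vecMul_vecMul, Matrix.nonsing_inv_mul P hP,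
      Matrix.vecMul_one]
    exact h.dotProduct_pos

lemma eigenvalue_eq (h : IsDominantSplitting M μ u w) (hv : w ⬝ᵥ v ≠ 0)
    (hMv : M *ᵥ v = c • v) : c = μ + w ⬝ᵥ u := by
  have hdot := congrArg (w ⬝ᵥ ·) (h.mulVec_eq v)
  simp only [hMv, dotProduct_add, dotProduct_smul, smul_eq_mul] at hdot
  exact mul_right_cancel₀ hv (by linear_combination hdot)

lemma eigenvector_eq_smul (h : IsDominantSplitting M μ u w) (hv : w ⬝ᵥ v ≠ 0)
    (hMv : M *ᵥ v = c • v) : v = ((w ⬝ᵥ v) / (w ⬝ᵥ u)) • u := by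
  have heq : (w ⬝ᵥ u) • v = (w ⬝ᵥ v) • u := by
    have hsplit := h.mulVec_eq v
    rw [hMv, h.eigenvalue_eq hv hMv, add_smul] at hsplit
    exact add_left_cancel hsplit
  rw [div_eq_inv_mul, mul_smul, ← heq, inv_smul_smul₀ h.dotProduct_pos.ne']

end IsDominantSplitting

end DominantSplitting

section InvariantCone

namespace IsDominantSplitting

variable {m : ℕ} {M : Matrix (Fin m) (Fin m) ℝ} {μ c : ℝ} {u w v x p : Fin m → ℝ}
  {C K : Set (Fin m → ℝ)}

lemma dotProduct_smul_mem (h : IsDominantSplitting M μ u w) (hC : IsConvexCone C)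
    (hclosed : IsClosed C) (hM : InvariantUnder M C) (hx : x ∈ C) : (w ⬝ᵥ x) • u ∈ C := by
  rcases le_or_gt μ 0 with hμ | hμ
  · have hmem := hC.add_mem (hM x hx) (hC.smul_mem (neg_nonneg.2 hμ) hx)
    rw [h.mulVec_eq x] at hmem
    convert hmem using 1
    module
  -- `M` contracts the line through `(wᵀu) x` and `(wᵀx) u` towards the latter point.
  · set ρ := μ + w ⬝ᵥ u with hρ
    have hμρ : μ < ρ := lt_add_of_pos_right μ h.dotProduct_pos
    have hρ0 : 0 < ρ := hμ.trans hμρ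
    let y : ℝ → Fin m → ℝ := fun t => (t * (w ⬝ᵥ u)) • x + ((1 - t) * (w ⬝ᵥ x)) • u
    have hcont : Continuous y := by fun_prop
    have hMy : ∀ t, ρ⁻¹ • (M *ᵥ y t) = y (μ / ρ * t) := by
      intro t
      simp only [y, Matrix.mulVec_add, Matrix.mulVec_smul, h.mulVec_self, h.mulVec_eq x, ← hρ]
      match_scalars
      · field_simp
      · field_simp
        rw [hρ]
        ring
    have hmem : ∀ n : ℕ, y ((μ / ρ) ^ n) ∈ C := by
      intro n
      induction n with
      | zero => simpa [y] using hC.smul_mem h.dotProduct_pos.le hx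
      | succ n ih =>
        rw [pow_succ', ← hMy]
        exact hC.smul_mem (inv_nonneg.2 hρ0.le) (hM _ ih)
    have hpow : Filter.Tendsto (fun n : ℕ => (μ / ρ) ^ n) Filter.atTop (𝓝 0) :=
      tendsto_pow_atTop_nhds_zero_of_lt_one (div_nonneg hμ.le hρ0.le) ((div_lt_one hρ0).2 hμρ)
    have hlim := hclosed.mem_of_tendsto ((hcont.tendsto 0).comp hpow) (.of_forall hmem)
    simpa [y] using hlim

lemma dotProduct_ne_zero_of_mem_interior (h : IsDominantSplitting M μ u w) (hC : IsProperCone C)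
    (hM : InvariantUnder M C) (hp : p ∈ interior C) : w ⬝ᵥ p ≠ 0 := by
  intro hzero
  obtain ⟨ε, hε, hpos, hneg⟩ := exists_pos_add_smul_mem_sub_smul_mem hp u
  have hpos' := h.dotProduct_smul_mem hC.isConvexCone hC.isClosed hM hpos
  have hneg' := h.dotProduct_smul_mem hC.isConvexCone hC.isClosed hM hneg
  rw [dotProduct_add, dotProduct_smul, hzero, zero_add] at hpos'
  rw [dotProduct_sub, dotProduct_smul, hzero, zero_sub, neg_smul] at hneg'
  exact smul_ne_zero (smul_pos hε h.dotProduct_pos).ne' h.ne_zero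
    (hC.eq_zero_of_neg_mem hpos' hneg')

lemma mem_or_neg_mem (h : IsDominantSplitting M μ u w) (hC : IsProperCone C)
    (hM : InvariantUnder M C) : u ∈ C ∨ -u ∈ C := by
  obtain ⟨p, hp⟩ := hC.nonempty_interior
  have hmem := h.dotProduct_smul_mem hC.isConvexCone hC.isClosed hM (interior_subset hp)
  rcases lt_or_gt_of_ne (h.dotProduct_ne_zero_of_mem_interior hC hM hp) with hneg | hpos
  · right
    have hscale := hC.isConvexCone.smul_mem (neg_nonneg.2 (inv_nonpos.2 hneg.le)) hmem
    rwa [neg_smul, inv_smul_smul₀ hneg.ne] at hscale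
  · left
    have hscale := hC.isConvexCone.smul_mem (inv_nonneg.2 hpos.le) hmem
    rwa [inv_smul_smul₀ hpos.ne'] at hscale

lemma dotProduct_nonneg_of_mem (h : IsDominantSplitting M μ u w) (hC : IsProperCone C)
    (hM : InvariantUnder M C) (hu : u ∈ C) (hx : x ∈ C) : 0 ≤ w ⬝ᵥ x := by
  by_contra! hneg
  exact h.ne_zero (hC.eq_zero_of_smul_mem hneg hu
    (h.dotProduct_smul_mem hC.isConvexCone hC.isClosed hM hx))

lemma dotProduct_pos_of_mem (h : IsDominantSplitting M μ u w) (hμ : μ < 0) (hC : IsProperCone C)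
    (hM : InvariantUnder M C) (hu : u ∈ C) (hx : x ∈ C) (hx0 : x ≠ 0) : 0 < w ⬝ᵥ x := by
  refine (h.dotProduct_nonneg_of_mem hC hM hu hx).lt_of_ne' fun hzero => ?_
  have hMx := hM x hx
  rw [h.mulVec_eq, hzero, zero_smul, add_zero] at hMx
  exact hx0 (hC.eq_zero_of_smul_mem hμ hx hMx)

lemma mem_interior_of_mulVec_mem (h : IsDominantSplitting M μ u w) (hμ : μ < 0)
    (hK : IsConvexCone K) (hp : p ∈ interior K) (hMp : M *ᵥ p ∈ K) (hwp : 0 < w ⬝ᵥ p) :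
    u ∈ interior K := by
  have hmem := hK.add_mem_interior (hK.smul_mem_interior (neg_pos.2 hμ) hp) hMp
  rw [h.mulVec_eq p, neg_smul, neg_add_cancel_left] at hmem
  simpa [hwp.ne'] using hK.smul_mem_interior (inv_pos.2 hwp) hmem

lemma eigenvector_notMem_frontier (h : IsDominantSplitting M μ u w) (hμ : μ < 0)
    (hC : IsProperCone C) (hM : InvariantUnder M C) (huC : u ∈ C) (hK : IsConvexCone K)
    (huK : u ∈ interior K) (hv : v ∈ C) (hv0 : v ≠ 0) (hMv : M *ᵥ v = c • v) :
    v ∉ frontier K := by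
  have hwv := h.dotProduct_pos_of_mem hμ hC hM huC hv hv0
  rw [h.eigenvector_eq_smul hwv.ne' hMv]
  exact fun hfrontier =>
    hfrontier.2 (hK.smul_mem_interior (div_pos hwv h.dotProduct_pos) huK)

lemma nonneg_of_mul_eq_smul_one {B : Matrix (Fin m) (Fin m) ℝ}
    (h : IsDominantSplitting M μ u w) (hpos : 0 ≤ μ + w ⬝ᵥ u) (hBM : B * M = c • 1)
    (hK : IsProperCone K) (hu : u ∈ K) (hBu : B *ᵥ u ∈ K) : 0 ≤ c := by
  by_contra! hneg
  have hcu : c • u = (μ + w ⬝ᵥ u) • (B *ᵥ u) := by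
    rw [← Matrix.mulVec_smul, ← h.mulVec_self, Matrix.mulVec_mulVec, hBM, Matrix.smul_mulVec,
      Matrix.one_mulVec]
  exact h.ne_zero (hK.eq_zero_of_smul_mem hneg hu
    (hcu ▸ hK.isConvexCone.smul_mem hpos hBu))

end IsDominantSplitting

end InvariantCone

section TwoByTwo

/-- `M` is a scalar multiple of the identity; such matrices have no distinguished dominant
eigenline. The body is spelled as in `fam1`. -/
def IsScalar (M : Matrix (Fin 2) (Fin 2) ℝ) : Prop :=
  ∃ c : ℝ, M = c • (1 : Matrix (Fin 2) (Fin 2) ℝ)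

variable {M : Matrix (Fin 2) (Fin 2) ℝ} {K : Set (Fin 2 → ℝ)} {v : Fin 2 → ℝ} {μ : ℝ}
  {u w : Fin 2 → ℝ}

lemma not_isScalar_of_det_neg (hM : M.det < 0) : ¬ IsScalar M := by
  rintro ⟨c, rfl⟩
  rw [Matrix.det_smul, Matrix.det_one, Fintype.card_fin, mul_one] at hM
  exact hM.not_ge (sq_nonneg c)

lemma rho2_smul_one (c : ℝ) : rho2 (c • (1 : Matrix (Fin 2) (Fin 2) ℝ)) = c := by
  simp only [rho2, Matrix.trace_smul, Matrix.trace_one, Matrix.det_smul, Matrix.det_one,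
    Fintype.card_fin]
  norm_num [mul_pow, mul_comm]

lemma not_isScalar_of_nonDomEigvec (hv : NonDomEigvec M v) : ¬ IsScalar M := by
  rintro ⟨c, rfl⟩
  obtain ⟨d, hd, hv0, hMv⟩ := hv
  rw [rho2_smul_one] at hd
  rw [Matrix.smul_mulVec, Matrix.one_mulVec] at hMv
  exact hd (smul_left_injective ℝ hv0 hMv).symm

lemma isDominantSplitting_diagonal {d : Fin 2 → ℝ} {i j : Fin 2} (h : d j < d i) :
    IsDominantSplitting (Matrix.diagonal d) (d j) (Pi.single i 1)
      (Pi.single i (d i - d j)) where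
  eq_add_vecMulVec := by
    ext a b
    fin_cases i <;> fin_cases j <;> fin_cases a <;> fin_cases b <;>
      simp_all [Matrix.vecMulVec_apply]
  dotProduct_pos := by simpa using h

lemma exists_isDominantSplitting (hd : IsDiagonalizable M) (hM : ¬ IsScalar M) :
    ∃ μ u w, IsDominantSplitting M μ u w := by
  obtain ⟨P, hP, hdiag⟩ := hd
  set d := (P⁻¹ * M * P).diag
  have hMd : P * Matrix.diagonal d * P⁻¹ = M := by
    rw [hdiag.diagonal_diag, ← mul_assoc, ← mul_assoc, Matrix.mul_nonsing_inv P hP, one_mul,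
      Matrix.mul_nonsing_inv_cancel_right P M hP]
  have hne : d 0 ≠ d 1 := by
    intro heq
    have hscalar : Matrix.diagonal d = d 0 • 1 := by
      rw [Matrix.smul_one_eq_diagonal]
      congr 1
      ext i
      fin_cases i
      exacts [rfl, heq.symm]
    refine hM ⟨d 0, ?_⟩
    rw [← hMd, hscalar, mul_smul_comm, mul_one, smul_mul_assoc, Matrix.mul_nonsing_inv P hP]
  rw [← hMd]
  rcases hne.lt_or_gt with h | h
  · exact ⟨_, _, _, (isDominantSplitting_diagonal h).conj hP⟩
  · exact ⟨_, _, _, (isDominantSplitting_diagonal h).conj hP⟩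

namespace IsDominantSplitting

lemma trace_eq (h : IsDominantSplitting M μ u w) : M.trace = 2 * μ + w ⬝ᵥ u := by
  rw [h.eq_add_vecMulVec, Matrix.trace_add, Matrix.trace_smul, Matrix.trace_one,
    Matrix.trace_vecMulVec, Fintype.card_fin, dotProduct_comm, smul_eq_mul, mul_comm]
  rfl

lemma det_eq (h : IsDominantSplitting M μ u w) : M.det = μ * (μ + w ⬝ᵥ u) := by
  rw [h.eq_add_vecMulVec, Matrix.det_fin_two]
  simp only [Matrix.add_apply, Matrix.smul_apply, Matrix.one_apply_eq, smul_eq_mul, mul_one,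
    Matrix.vecMulVec_apply, ne_eq, zero_ne_one, not_false_eq_true, Matrix.one_apply_ne, mul_zero,
    zero_add, one_ne_zero, dotProduct, Fin.sum_univ_two]
  ring

lemma rho2_eq (h : IsDominantSplitting M μ u w) : rho2 M = μ + w ⬝ᵥ u := by
  have hdisc : M.trace ^ 2 - 4 * M.det = (w ⬝ᵥ u) ^ 2 := by
    rw [h.trace_eq, h.det_eq]
    ring
  rw [rho2, hdisc, Real.sqrt_sq h.dotProduct_pos.le, h.trace_eq]
  ring

lemma domEigvec (h : IsDominantSplitting M μ u w) : DomEigvec M u :=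
  ⟨h.ne_zero, by rw [h.rho2_eq, h.mulVec_self]⟩

lemma nonDomEigvec_iff (h : IsDominantSplitting M μ u w) :
    NonDomEigvec M v ↔ v ≠ 0 ∧ w ⬝ᵥ v = 0 := by
  rw [NonDomEigvec, h.rho2_eq]
  constructor
  · rintro ⟨c, hc, hv0, hMv⟩
    exact ⟨hv0, by_contra fun hwv => hc (h.eigenvalue_eq hwv hMv)⟩
  · rintro ⟨hv0, hwv⟩
    exact ⟨μ, (lt_add_of_pos_right μ h.dotProduct_pos).ne, hv0, by simp [h.mulVec_eq, hwv]⟩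

lemma exists_of_domEigvec (h : IsDominantSplitting M μ u w) (hv : DomEigvec M v) :
    ∃ w', IsDominantSplitting M μ v w' := by
  obtain ⟨hv0, hMv⟩ := hv
  have hwv : w ⬝ᵥ v ≠ 0 := by
    intro hzero
    obtain ⟨c, hc, -, hMc⟩ := h.nonDomEigvec_iff.2 ⟨hv0, hzero⟩
    exact hc (smul_left_injective ℝ hv0 (hMc.symm.trans hMv))
  have hsmul := h.eigenvector_eq_smul hwv hMv
  have hu : u = ((w ⬝ᵥ v) / (w ⬝ᵥ u))⁻¹ • v :=
    (eq_inv_smul_iff₀ (div_ne_zero hwv h.dotProduct_pos.ne')).2 hsmul.symm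
  exact ⟨_, of_smul_left (hu ▸ h)⟩

lemma neg_of_det_neg (h : IsDominantSplitting M μ u w) (hdet : M.det < 0) : μ < 0 := by
  by_contra! hμ
  rw [h.det_eq] at hdet
  exact hdet.not_ge (mul_nonneg hμ (add_nonneg hμ h.dotProduct_pos.le))

lemma add_dotProduct_pos_of_det_neg (h : IsDominantSplitting M μ u w) (hdet : M.det < 0) :
    0 < μ + w ⬝ᵥ u := by
  have hμ := h.neg_of_det_neg hdet
  rw [h.det_eq] at hdet
  exact pos_of_mul_neg_right hdet hμ.le

lemma nonneg_of_det_nonneg (h : IsDominantSplitting M μ u w) (htrace : 0 ≤ M.trace)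
    (hdet : 0 ≤ M.det) : 0 ≤ μ := by
  by_contra! hμ
  rw [h.trace_eq] at htrace
  rw [h.det_eq] at hdet
  have hρ := nonpos_of_mul_nonneg_right hdet hμ
  linarith

lemma dotProduct_nonneg_of_forall_notMem_interior (h : IsDominantSplitting M μ u w)
    (hK : IsProperCone K) (hu : u ∈ K) (hint : ∀ v, NonDomEigvec M v → v ∉ interior K) {x}
    (hx : x ∈ K) : 0 ≤ w ⬝ᵥ x :=
  hK.isConvexCone.apply_nonneg_of_forall_mem_interior_ne_zero hK.nonempty_interior
    (dotProductBilin ℝ ℝ w)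
    (fun q hq hwq => hint q (h.nonDomEigvec_iff.2 ⟨hK.ne_zero_of_mem_interior hq, hwq⟩) hq)
    hu h.dotProduct_pos hx

lemma invariantUnder (h : IsDominantSplitting M μ u w) (hμ : 0 ≤ μ) (hK : IsProperCone K)
    (hu : u ∈ K) (hint : ∀ v, NonDomEigvec M v → v ∉ interior K) : InvariantUnder M K := by
  intro x hx
  rw [h.mulVec_eq]
  exact hK.isConvexCone.add_mem (hK.isConvexCone.smul_mem hμ hx) <|
    hK.isConvexCone.smul_mem (h.dotProduct_nonneg_of_forall_notMem_interior hK hu hint hx) hu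

end IsDominantSplitting

end TwoByTwo

section BigCone

variable {n k N : ℕ} {A : Fin n → Matrix (Fin 2) (Fin 2) ℝ} {u : Fin N → Fin 2 → ℝ}
  {C : Set (Fin 2 → ℝ)} {i : Fin n}

lemma invariantUnder_of_mem_fam1 (hA : ∀ i, InvariantUnder (A i) C)
    {M : Matrix (Fin 2) (Fin 2) ℝ} (hM : M ∈ fam1 A) : InvariantUnder M C := by
  rcases hM with ⟨i, rfl⟩ | ⟨i, j, -, -, rfl, -⟩
  · exact hA i
  · intro x hx
    rw [← Matrix.mulVec_mulVec]
    exact hA i _ (hA j x hx)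

lemma isConvexCone_bigCone : IsConvexCone (bigCone n k N A u) :=
  isConvexCone_coneGen _

lemma coneGen_range_subset_bigCone : coneGen (Set.range u) ⊆ bigCone n k N A u :=
  coneGen_mono Set.subset_union_left

lemma mem_bigCone (j : Fin N) : u j ∈ bigCone n k N A u :=
  coneGen_range_subset_bigCone (subset_coneGen _ ⟨j, rfl⟩)

lemma mulVec_mem_bigCone (hi : (i : ℕ) < k) (j : Fin N) : A i *ᵥ u j ∈ bigCone n k N A u :=
  subset_coneGen _ (Or.inr ⟨i, hi, j, rfl⟩)

lemma mulVec_mem_bigCone_of_mem_coneGen (hi : (i : ℕ) < k) {x : Fin 2 → ℝ}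
    (hx : x ∈ coneGen (Set.range u)) : A i *ᵥ x ∈ bigCone n k N A u :=
  mulVec_mem_of_mem_coneGen isConvexCone_bigCone
    (Set.forall_mem_range.2 (mulVec_mem_bigCone hi)) hx

lemma bigCone_subset (hC : IsConvexCone C) (hA : ∀ i, InvariantUnder (A i) C)
    (hu : ∀ j, u j ∈ C) : bigCone n k N A u ⊆ C := by
  refine coneGen_subset hC (Set.union_subset (Set.range_subset_iff.2 hu) ?_)
  rintro _ ⟨i, -, j, rfl⟩
  exact hA i _ (hu j)

lemma bigCone_eq_coneGen_range (h : ¬ ∃ i : Fin n, (i : ℕ) < k) :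
    bigCone n k N A u = coneGen (Set.range u) := by
  refine Set.Subset.antisymm (coneGen_subset (isConvexCone_coneGen _) ?_)
    coneGen_range_subset_bigCone
  refine Set.union_subset (subset_coneGen _) ?_
  rintro _ ⟨i, hi, -⟩
  exact absurd ⟨i, hi⟩ h

lemma isClosed_bigCone (φ : StrongDual ℝ (Fin 2 → ℝ)) (hu : ∀ j, 0 < φ (u j))
    (hAu : ∀ i : Fin n, (i : ℕ) < k → ∀ j, 0 < φ (A i *ᵥ u j)) :
    IsClosed (bigCone n k N A u) := by
  have hfinite : {y | ∃ i : Fin n, (i : ℕ) < k ∧ ∃ j, y = A i *ᵥ u j}.Finite :=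
    (Set.finite_range fun ij : Fin n × Fin N => A ij.1 *ᵥ u ij.2).subset <| by
      rintro _ ⟨i, -, j, rfl⟩
      exact ⟨(i, j), rfl⟩
  refine isClosed_coneGen_of_finite ((Set.finite_range u).union hfinite) φ ?_
  rintro _ (⟨j, rfl⟩ | ⟨i, hi, j, rfl⟩)
  exacts [hu j, hAu i hi j]

end BigCone

section DominantFamily

/-- The vectors `u j` represent the dominant eigenlines of the family `𝓜`: each `u j` is a dominant
eigenvector of a member, and each non-scalar member has some `u j` as dominant eigenvector. -/
structure IsDominantFamily {ι : Type*} (𝓜 : Set (Matrix (Fin 2) (Fin 2) ℝ))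
    (u : ι → Fin 2 → ℝ) : Prop where
  exists_matrix : ∀ j, ∃ M ∈ 𝓜, ∃ μ w, IsDominantSplitting M μ (u j) w
  exists_index : ∀ M ∈ 𝓜, ¬ IsScalar M → ∃ j μ w, IsDominantSplitting M μ (u j) w

namespace IsDominantFamily

variable {ι : Type*} {𝓜 : Set (Matrix (Fin 2) (Fin 2) ℝ)} {u : ι → Fin 2 → ℝ}
  {M : Matrix (Fin 2) (Fin 2) ℝ} {C K : Set (Fin 2 → ℝ)}

lemma of_isDiagonalizable (hdiag : ∀ M ∈ 𝓜, IsDiagonalizable M)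
    (hrep : ∀ j, ∃ M ∈ 𝓜, ¬ IsScalar M ∧ DomEigvec M (u j))
    (hall : ∀ M ∈ 𝓜, ¬ IsScalar M → ∀ v, DomEigvec M v → ∃ (j : ι) (c : ℝ), v = c • u j) :
    IsDominantFamily 𝓜 u where
  exists_matrix j := by
    obtain ⟨M, hM, hns, hdom⟩ := hrep j
    obtain ⟨μ, v, w, h⟩ := exists_isDominantSplitting (hdiag M hM) hns
    obtain ⟨w', h'⟩ := h.exists_of_domEigvec hdom
    exact ⟨M, hM, μ, w', h'⟩
  exists_index M hM hns := by
    obtain ⟨μ, v, w, h⟩ := exists_isDominantSplitting (hdiag M hM) hns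
    obtain ⟨j, c, rfl⟩ := hall M hM hns v h.domEigvec
    exact ⟨j, μ, c • w, h.of_smul_left⟩

lemma ne_zero (hdom : IsDominantFamily 𝓜 u) (j : ι) : u j ≠ 0 := by
  obtain ⟨M, -, μ, w, h⟩ := hdom.exists_matrix j
  exact h.ne_zero

lemma mem_of_mem (hdom : IsDominantFamily 𝓜 u) (hU : IsProperCone (coneGen (Set.range u)))
    (hint : ∀ v, NonDomEigvec M v → v ∉ interior (coneGen (Set.range u)))
    (hM : M ∈ 𝓜) (hdet : M.det < 0) (hC : IsProperCone C) (hinv : ∀ M ∈ 𝓜, InvariantUnder M C)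
    {j₀ : ι} {μ : ℝ} {w : Fin 2 → ℝ} (h : IsDominantSplitting M μ (u j₀) w) (hj₀ : u j₀ ∈ C)
    (j : ι) : u j ∈ C := by
  obtain ⟨M', hM', μ', w', h'⟩ := hdom.exists_matrix j
  refine (h'.mem_or_neg_mem hC (hinv M' hM')).resolve_right fun hneg => ?_
  have hnonneg : 0 ≤ w ⬝ᵥ u j := h.dotProduct_nonneg_of_forall_notMem_interior hU
    (subset_coneGen _ ⟨j₀, rfl⟩) hint (subset_coneGen _ ⟨j, rfl⟩)
  have hpos := h.dotProduct_pos_of_mem (h.neg_of_det_neg hdet) hC (hinv M hM) hj₀ hneg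
    (neg_ne_zero.2 (hdom.ne_zero j))
  rw [dotProduct_neg, neg_pos] at hpos
  exact hpos.not_ge hnonneg

lemma exists_isProperCone_forall_mem (hdom : IsDominantFamily 𝓜 u)
    (hU : IsProperCone (coneGen (Set.range u)))
    (hint : ∀ v, NonDomEigvec M v → v ∉ interior (coneGen (Set.range u)))
    (hM : M ∈ 𝓜) (hdet : M.det < 0) (hC : IsProperCone C)
    (hinv : ∀ M ∈ 𝓜, InvariantUnder M C) :
    ∃ C', IsProperCone C' ∧ (∀ M ∈ 𝓜, InvariantUnder M C') ∧ ∀ j, u j ∈ C' := by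
  obtain ⟨j₀, μ, w, h⟩ := hdom.exists_index M hM (not_isScalar_of_det_neg hdet)
  rcases h.mem_or_neg_mem hC (hinv M hM) with hmem | hmem
  · exact ⟨C, hC, hinv, hdom.mem_of_mem hU hint hM hdet hC hinv h hmem⟩
  · have hinv' : ∀ M ∈ 𝓜, InvariantUnder M (-C) := fun M hM => (hinv M hM).neg
    exact ⟨-C, hC.neg, hinv', hdom.mem_of_mem hU hint hM hdet hC.neg hinv' h hmem⟩

lemma notMem_interior_of_nonDomEigvec (hdom : IsDominantFamily 𝓜 u) (hM : M ∈ 𝓜)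
    (hC : IsProperCone C) (hinv : InvariantUnder M C) {v : Fin 2 → ℝ} (hv : NonDomEigvec M v) :
    v ∉ interior C := by
  obtain ⟨j, μ, w, h⟩ := hdom.exists_index M hM (not_isScalar_of_nonDomEigvec hv)
  exact fun hmem =>
    h.dotProduct_ne_zero_of_mem_interior hC hinv hmem (h.nonDomEigvec_iff.1 hv).2

lemma invariantUnder (hdom : IsDominantFamily 𝓜 u) (hM : M ∈ 𝓜) (htrace : 0 ≤ M.trace)
    (hdet : 0 ≤ M.det) (hK : IsProperCone K) (hu : ∀ j, u j ∈ K)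
    (hint : ∀ v, NonDomEigvec M v → v ∉ interior K) : InvariantUnder M K := by
  by_cases hs : IsScalar M
  · obtain ⟨c, rfl⟩ := hs
    have hc : 0 ≤ c := by simpa using htrace
    intro x hx
    rw [Matrix.smul_mulVec, Matrix.one_mulVec]
    exact hK.isConvexCone.smul_mem hc hx
  · obtain ⟨j, μ, w, h⟩ := hdom.exists_index M hM hs
    exact h.invariantUnder (h.nonneg_of_det_nonneg htrace hdet) hK (hu j) hint

end IsDominantFamily

end DominantFamily

section CommonInvariantCone

namespace IsDominantFamily

variable {n k N : ℕ} {A : Fin n → Matrix (Fin 2) (Fin 2) ℝ} {u : Fin N → Fin 2 → ℝ}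
  {C : Set (Fin 2 → ℝ)}

lemma isProperCone_bigCone (hdom : IsDominantFamily (fam1 A) u)
    (hU : IsProperCone (coneGen (Set.range u))) (hk : ∀ i : Fin n, (i : ℕ) < k → (A i).det < 0)
    (hneg : ∃ i : Fin n, (i : ℕ) < k) (hC : IsProperCone C) (hinv : ∀ i, InvariantUnder (A i) C)
    (hu : ∀ j, u j ∈ C) : IsProperCone (bigCone n k N A u) := by
  have hKC := bigCone_subset (k := k) hC.isConvexCone hinv hu
  refine hC.of_subset hKC isConvexCone_bigCone ?_
    (hU.nonempty_interior.mono (interior_mono coneGen_range_subset_bigCone))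
  obtain ⟨i, hi⟩ := hneg
  obtain ⟨j, μ, w, h⟩ := hdom.exists_index (A i) (Or.inl ⟨i, rfl⟩)
    (not_isScalar_of_det_neg (hk i hi))
  have hpos : ∀ x ∈ C, x ≠ 0 → 0 < w ⬝ᵥ x := fun x hx hx0 =>
    h.dotProduct_pos_of_mem (h.neg_of_det_neg (hk i hi)) hC (hinv i) (hu j) hx hx0
  refine isClosed_bigCone (dotProductBilin ℝ ℝ w).toContinuousLinearMap
    (fun j => hpos _ (hu j) (hdom.ne_zero j)) fun i hi j => ?_
  refine hpos _ (hinv i _ (hu j)) fun hzero => hdom.ne_zero j ?_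
  exact Matrix.eq_zero_of_mulVec_eq_zero (hk i hi).ne hzero

lemma eigenvector_notMem_frontier_bigCone (hdom : IsDominantFamily (fam1 A) u)
    (hU : IsProperCone (coneGen (Set.range u))) (hK : IsProperCone (bigCone n k N A u))
    (hC : IsProperCone C) (hinv : ∀ i, InvariantUnder (A i) C) (hu : ∀ j, u j ∈ C)
    {i : Fin n} (hi : (i : ℕ) < k) (hdet : (A i).det < 0) {v : Fin 2 → ℝ} (hv0 : v ≠ 0)
    {c : ℝ} (hv : A i *ᵥ v = c • v) : v ∉ frontier (bigCone n k N A u) := by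
  intro hfrontier
  have hKC := bigCone_subset (k := k) hC.isConvexCone hinv hu
  obtain ⟨j, μ, w, h⟩ := hdom.exists_index (A i) (Or.inl ⟨i, rfl⟩) (not_isScalar_of_det_neg hdet)
  have hμ := h.neg_of_det_neg hdet
  obtain ⟨p, hp⟩ := hU.nonempty_interior
  have hpK : p ∈ interior (bigCone n k N A u) := interior_mono coneGen_range_subset_bigCone hp
  have hwp : 0 < w ⬝ᵥ p := h.dotProduct_pos_of_mem hμ hC (hinv i) (hu j)
    (hKC (interior_subset hpK)) (hK.ne_zero_of_mem_interior hpK)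
  have huK : u j ∈ interior (bigCone n k N A u) := h.mem_interior_of_mulVec_mem hμ
    isConvexCone_bigCone hpK (mulVec_mem_bigCone_of_mem_coneGen hi (interior_subset hp)) hwp
  exact h.eigenvector_notMem_frontier hμ hC (hinv i) (hu j) isConvexCone_bigCone huK
    (hKC (hK.isClosed.frontier_subset hfrontier)) hv0 hv hfrontier

lemma mulVec_mulVec_mem_bigCone (hdom : IsDominantFamily (fam1 A) u)
    (htrace : ∀ M ∈ fam1 A, 0 ≤ M.trace) (hK : IsProperCone (bigCone n k N A u))
    (hint : ∀ M ∈ fam1 A, ∀ v, NonDomEigvec M v → v ∉ interior (bigCone n k N A u))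
    {i l : Fin n} (hi : (i : ℕ) < k) (hdi : (A i).det < 0) (hdl : (A l).det < 0) (j : Fin N) :
    A i *ᵥ (A l *ᵥ u j) ∈ bigCone n k N A u := by
  rw [Matrix.mulVec_mulVec]
  by_cases hs : IsScalar (A i * A l)
  · obtain ⟨c, hc⟩ := hs
    obtain ⟨j', μ, w, h⟩ := hdom.exists_index (A l) (Or.inl ⟨l, rfl⟩)
      (not_isScalar_of_det_neg hdl)
    have hc0 : 0 ≤ c := h.nonneg_of_mul_eq_smul_one (h.add_dotProduct_pos_of_det_neg hdl).le hc hK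
      (mem_bigCone j') (mulVec_mem_bigCone hi j')
    rw [hc, Matrix.smul_mulVec, Matrix.one_mulVec]
    exact isConvexCone_bigCone.smul_mem hc0 (mem_bigCone j)
  · have hmem : A i * A l ∈ fam1 A := Or.inr ⟨i, l, hdi, hdl, rfl, hs⟩
    have hdet : 0 ≤ (A i * A l).det := by
      rw [Matrix.det_mul]
      exact (mul_pos_of_neg_of_neg hdi hdl).le
    exact hdom.invariantUnder hmem (htrace _ hmem) hdet hK mem_bigCone (hint _ hmem) _
      (mem_bigCone j)

lemma invariantUnder_bigCone (hdom : IsDominantFamily (fam1 A) u)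
    (htrace : ∀ M ∈ fam1 A, 0 ≤ M.trace) (hk : ∀ i : Fin n, (A i).det < 0 ↔ (i : ℕ) < k)
    (hK : IsProperCone (bigCone n k N A u))
    (hint : ∀ M ∈ fam1 A, ∀ v, NonDomEigvec M v → v ∉ interior (bigCone n k N A u))
    (i : Fin n) : InvariantUnder (A i) (bigCone n k N A u) := by
  have hmem : A i ∈ fam1 A := Or.inl ⟨i, rfl⟩
  rcases lt_or_ge (A i).det 0 with hdet | hdet
  · refine fun x hx => mulVec_mem_of_mem_coneGen isConvexCone_bigCone ?_ hx
    have hi := (hk i).1 hdet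
    rintro _ (⟨j, rfl⟩ | ⟨l, hl, j, rfl⟩)
    · exact mulVec_mem_bigCone hi j
    · exact hdom.mulVec_mulVec_mem_bigCone htrace hK hint hi hdet ((hk l).2 hl) j
  · exact hdom.invariantUnder hmem (htrace _ hmem) hdet hK mem_bigCone (hint _ hmem)

end IsDominantFamily

end CommonInvariantCone

/-- Theorem: with all matrices of the extended family `𝒜₁` diagonalizable
Vandergraft matrices, `det A i < 0` exactly for `i < k`, and `u 1, …, u N`
unit vectors, one for each distinct dominant eigenline of the non-scalar
matrices of `𝒜₁`, chosen so that the cone they generate is proper and its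
interior is free of non-dominant eigenvectors: a common invariant proper
cone for `𝒜` exists iff `K = bigCone` is proper, its interior contains no
non-dominant eigenvector of any matrix of `𝒜₁`, and no eigenvector of any
`A i` with `i < k` lies on the boundary of `K`. -/
theorem common_invariant_cone_all_diagonalizable
    (n k N : ℕ) (A : Fin n → Matrix (Fin 2) (Fin 2) ℝ)
    (hk : ∀ i : Fin n, (A i).det < 0 ↔ (i : ℕ) < k)
    (hVd : ∀ M ∈ fam1 A, IsVandergraft M ∧ IsDiagonalizable M)
    (u : Fin N → (Fin 2 → ℝ))
    (hunit : ∀ j, (u j 0) ^ 2 + (u j 1) ^ 2 = 1)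
    (hrep : ∀ j, ∃ M ∈ fam1 A,
      (¬ ∃ c : ℝ, M = c • (1 : Matrix (Fin 2) (Fin 2) ℝ)) ∧ DomEigvec M (u j))
    (hall : ∀ M ∈ fam1 A, (¬ ∃ c : ℝ, M = c • (1 : Matrix (Fin 2) (Fin 2) ℝ)) →
      ∀ v, DomEigvec M v → ∃ (j : Fin N) (c : ℝ), v = c • u j)
    (hinj : ∀ j j' : Fin N,
      Submodule.span ℝ {u j} = Submodule.span ℝ {u j'} → j = j')
    (hUproper : IsProperCone (coneGen (Set.range u)))
    (hUint : ∀ M ∈ fam1 A, ∀ v, NonDomEigvec M v →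
      v ∉ interior (coneGen (Set.range u))) :
    (∃ C : Set (Fin 2 → ℝ), IsProperCone C ∧ ∀ i, InvariantUnder (A i) C) ↔
      (IsProperCone (bigCone n k N A u) ∧
        (∀ M ∈ fam1 A, ∀ v, NonDomEigvec M v → v ∉ interior (bigCone n k N A u)) ∧
        (∀ i : Fin n, (i : ℕ) < k → ∀ v : Fin 2 → ℝ, v ≠ 0 →
          (∃ μ : ℝ, (A i).mulVec v = μ • v) → v ∉ frontier (bigCone n k N A u))) := by
  have hdom : IsDominantFamily (fam1 A) u :=
    .of_isDiagonalizable (fun M hM => (hVd M hM).2) hrep hall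
  constructor
  · rintro ⟨C, hC, hA⟩
    by_cases hneg : ∃ i : Fin n, (i : ℕ) < k
    · obtain ⟨i₀, hi₀⟩ := hneg
      have hi₀A : A i₀ ∈ fam1 A := Or.inl ⟨i₀, rfl⟩
      obtain ⟨C', hC', hinv, hu⟩ := hdom.exists_isProperCone_forall_mem hUproper
        (hUint _ hi₀A) hi₀A ((hk i₀).2 hi₀) hC fun M => invariantUnder_of_mem_fam1 hA
      have hA' : ∀ i, InvariantUnder (A i) C' := fun i => hinv _ (Or.inl ⟨i, rfl⟩)
      have hK : IsProperCone (bigCone n k N A u) := hdom.isProperCone_bigCone hUproper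
        (fun i => (hk i).2) ⟨i₀, hi₀⟩ hC' hA' hu
      refine ⟨hK, fun M hM v hv hvK => ?_, fun i hi v hv0 ⟨μ, hv⟩ => ?_⟩
      · exact hdom.notMem_interior_of_nonDomEigvec hM hC' (hinv M hM) hv
          (interior_mono (bigCone_subset hC'.isConvexCone hA' hu) hvK)
      · exact hdom.eigenvector_notMem_frontier_bigCone hUproper hK hC' hA' hu hi
          ((hk i).2 hi) hv0 hv
    · rw [bigCone_eq_coneGen_range hneg]
      exact ⟨hUproper, hUint, fun i hi => absurd ⟨i, hi⟩ hneg⟩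
  · rintro ⟨hK, hint, -⟩
    exact ⟨_, hK, hdom.invariantUnder_bigCone (fun M hM => (hVd M hM).1.2) hk hK hint⟩
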